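/- (Mehler formula at y = 0) For |ρ| < 1 and all real x: Σ_{n=0}^∞ (ρ^n / (2^n n!)) H_n(x) H_n(0) = (1/√(1−ρ²)) exp(−x² ρ²/(1−ρ²)). -/

import Mathlib

open Real Filter MeasureTheory

/-- Physicists' Hermite polynomials via the standard recurrence
`H₀ = 1`, `H₁(x) = 2x`, `H_{n+2}(x) = 2x H_{n+1}(x) - 2(n+1) H_n(x)`. -/
noncomputable def physHermite : ℕ → ℝ → ℝ
  | 0, _ => 1
  | 1, x => 2 * x
  | n+2, x => 2 * x * physHermite (n+1) x - 2 * ((n : ℝ) + 1) * physHermite n x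

lemma physHermite_succ_succ (n : ℕ) (x : ℝ) : physHermite (n+2) x =
    2 * x * physHermite (n+1) x - 2 * ((n : ℝ) + 1) * physHermite n x := by
  rw [physHermite]

lemma physHermite_zero_vals (m : ℕ) :
    physHermite (2*m) 0 = (-1)^m * (2*m).factorial / m.factorial ∧
    physHermite (2*m+1) 0 = 0 := by
  induction m with
  | zero => simp [physHermite]
  | succ k ih =>
    obtain ⟨h1, h2⟩ := ih
    have e1 : 2 * (k+1) = 2*k+2 := by ring
    have e2 : 2 * (k+1) + 1 = (2*k+1)+2 := by ring
    constructor
    · rw [e1, physHermite_succ_succ, h1, Nat.factorial_succ, Nat.factorial_succ (2*k),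
        Nat.factorial_succ k]
      have : (k.factorial : ℝ) ≠ 0 := by positivity
      have : (k : ℝ) + 1 ≠ 0 := by positivity
      push_cast
      field_simp
      ring
    · rw [e2, physHermite_succ_succ, h2]; ring

/-- Coefficients of the series in `t = ρ^2`. -/
noncomputable def mehC (x : ℝ) (m : ℕ) : ℝ := (-1/4)^m * physHermite (2*m) x / m.factorial

lemma mehC_zero (x : ℝ) : mehC x 0 = 1 := by simp [mehC, physHermite]

lemma mehC_one (x : ℝ) : mehC x 1 = 1/2 - x^2 := by
  simp [mehC, physHermite]; ring

lemma mehC_rec (x : ℝ) (m : ℕ) : ((m:ℝ)+2) * mehC x (m+2) =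
    (2*((m:ℝ)+1) + 1/2 - x^2) * mehC x (m+1) - ((m:ℝ)+1/2) * mehC x m := by
  have a1 := physHermite_succ_succ (2*m) x
  have a2 := physHermite_succ_succ (2*m+1) x
  have a3 := physHermite_succ_succ (2*m+2) x
  have e1 : 2 * (m+1) = 2*m+2 := by ring
  have e2 : 2 * (m+2) = 2*m+2+2 := by ring
  have key : physHermite (2*m+2+2) x = (4*x^2 - 2*(2*m+3) - 2*(2*m+2)) * physHermite (2*m+2) x
      - 4*(2*m+2)*(2*m+1) * physHermite (2*m) x := by
    rw [a3]
    have : physHermite (2*m+2+1) x = physHermite (2*m+1+2) x := rfl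
    rw [this, a2]
    push_cast at *
    linear_combination (2 * (2*(m:ℝ)+2)) * a1
  unfold mehC
  rw [e1, e2, key, Nat.factorial_succ (m+1), Nat.factorial_succ m]
  have : (m.factorial : ℝ) ≠ 0 := by positivity
  have : (m : ℝ) + 1 ≠ 0 := by positivity
  have : (m : ℝ) + 2 ≠ 0 := by positivity
  have : (m : ℝ) + 1 + 1 ≠ 0 := by positivity
  push_cast
  field_simp
  ring

lemma mehC_growth (x R : ℝ) (hR : 1 < R) : ∃ C, 0 ≤ C ∧ ∀ m, |mehC x m| ≤ C * R^m := by
  obtain ⟨ε, hε, rfl⟩ : ∃ ε, 0 < ε ∧ R = 1 + ε := ⟨R - 1, by linarith, by ring⟩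
  set K := 1/ε with hK
  have hKε : K * ε = 1 := by rw [hK]; field_simp
  have hK0 : 0 < K := by positivity
  obtain ⟨N, hN⟩ := exists_nat_ge ((K+1)*x^2/ε)
  have hN' : (K+1)*x^2 ≤ N * ε := by rwa [div_le_iff₀ hε] at hN
  set E : ℕ → ℝ := fun m => |mehC x (m+1)| + K * |mehC x (m+1) - mehC x m| with hE
  have step : ∀ m, N ≤ m → E (m+1) ≤ (1+ε) * E m := by
    intro m hm
    have hm' : (N:ℝ) ≤ m := by exact_mod_cast hm
    have hp : (0:ℝ) < (m:ℝ)+2 := by positivity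
    have hr := mehC_rec x m
    set c0 := mehC x m
    set c1 := mehC x (m+1)
    have hc2 : mehC x (m+1+1) = mehC x (m+2) := rfl
    simp only [hE]
    rw [hc2]
    set c2 := mehC x (m+2)
    have hd : ((m:ℝ)+2) * (c2 - c1) = ((m:ℝ)+1/2) * (c1 - c0) - x^2 * c1 := by
      linear_combination hr
    have hd2 : ((m:ℝ)+2) * |c2 - c1| ≤ ((m:ℝ)+1/2) * |c1 - c0| + x^2 * |c1| := by
      calc ((m:ℝ)+2) * |c2 - c1| = |((m:ℝ)+2) * (c2 - c1)| := by
            rw [abs_mul, abs_of_pos hp]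
        _ = |((m:ℝ)+1/2) * (c1 - c0) - x^2 * c1| := by rw [hd]
        _ ≤ |((m:ℝ)+1/2) * (c1 - c0)| + |x^2 * c1| := abs_sub _ _
        _ = _ := by
          rw [abs_mul, abs_mul, abs_of_nonneg (sq_nonneg x), abs_of_pos (by positivity : (0:ℝ) < (m:ℝ)+1/2)]
    have hc : |c2| ≤ |c1| + |c2 - c1| := by
      have := abs_add_le c1 (c2 - c1)
      simpa using this
    have hd3 : (K+1) * |c2 - c1| ≤ (K+1) * |c1 - c0| + ε * |c1| := by
      refine le_of_mul_le_mul_left ?_ hp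
      have h1 : (K+1) * (((m:ℝ)+2) * |c2 - c1|) ≤ (K+1) * (((m:ℝ)+1/2) * |c1 - c0| + x^2 * |c1|) :=
        mul_le_mul_of_nonneg_left hd2 (by positivity)
      have h2 : (K+1) * x^2 * |c1| ≤ ((m:ℝ)+2) * ε * |c1| := by
        refine mul_le_mul_of_nonneg_right ?_ (abs_nonneg _)
        nlinarith
      have h3 : 0 ≤ (K+1) * |c1 - c0| := by positivity
      nlinarith
    have : (1+ε) * (|c1| + K * |c1 - c0|) = (1+ε) * |c1| + (K+1) * |c1 - c0| := by
      linear_combination |c1 - c0| * hKε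
    rw [this]
    linarith
  have hE0 : ∀ m, 0 ≤ E m := fun m => by simp only [hE]; positivity
  have hb : ∀ k, E (N+k) ≤ E N * (1+ε)^k := by
    intro k
    induction k with
    | zero => simp
    | succ k ih =>
      calc E (N+(k+1)) ≤ (1+ε) * E (N+k) := step (N+k) (by omega)
        _ ≤ (1+ε) * (E N * (1+ε)^k) := mul_le_mul_of_nonneg_left ih (by positivity)
        _ = _ := by ring
  have hS : 0 ≤ ∑ i ∈ Finset.range (N+1), |mehC x i| := Finset.sum_nonneg fun i _ => abs_nonneg _
  refine ⟨E N + ∑ i ∈ Finset.range (N+1), |mehC x i|, add_nonneg (hE0 N) hS, fun m => ?_⟩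
  have hone : ∀ k : ℕ, 1 ≤ (1+ε)^k := fun k => one_le_pow₀ (by linarith)
  by_cases h : m < N+1
  · have h1 : |mehC x m| ≤ ∑ i ∈ Finset.range (N+1), |mehC x i| :=
      Finset.single_le_sum (f := fun i => |mehC x i|) (fun i _ => abs_nonneg _)
        (Finset.mem_range.2 h)
    have := hone m
    have := hE0 N
    nlinarith
  · obtain ⟨k, rfl⟩ : ∃ k, m = N + k + 1 := ⟨m - N - 1, by omega⟩
    have h1 : |mehC x (N+k+1)| ≤ E (N+k) := by
      simp only [hE]
      have : 0 ≤ K * |mehC x (N+k+1) - mehC x (N+k)| := by positivity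
      linarith
    have h2 : (1+ε)^k ≤ (1+ε)^(N+k+1) := pow_le_pow_right₀ (by linarith) (by omega)
    have h3 := mul_le_mul_of_nonneg_left h2 (hE0 N)
    have h4 := mul_nonneg hS (zero_le_one.trans (hone (N+k+1)))
    have := hb k
    nlinarith

noncomputable def mehF (x t : ℝ) : ℝ := ∑' m : ℕ, mehC x m * t^m

lemma mehC_bound (x r : ℝ) (hr0 : 0 ≤ r) (hr : r < 1) :
    Summable (fun m : ℕ => |mehC x m| * r^m) ∧
    Summable (fun m : ℕ => |mehC x m| * (m * r^(m-1))) := by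
  have hpos : 0 < (r+1)/2 := by linarith
  obtain ⟨C, hC, hb⟩ := mehC_growth x (2/(r+1)) (by rw [lt_div_iff₀ (by linarith)]; linarith)
  have hR : 0 < 2/(r+1) := by positivity
  set q := 2/(r+1) * r with hq
  have hq0 : 0 ≤ q := by positivity
  have hq1 : q < 1 := by
    rw [hq, div_mul_eq_mul_div, div_lt_one (by linarith)]; linarith
  constructor
  · refine Summable.of_nonneg_of_le (fun m => by positivity) (fun m => ?_)
      ((summable_geometric_of_lt_one hq0 hq1).mul_left C)
    calc |mehC x m| * r^m ≤ C * (2/(r+1))^m * r^m :=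
          mul_le_mul_of_nonneg_right (hb m) (by positivity)
      _ = C * q^m := by rw [hq, mul_pow]; ring
  · rw [← summable_nat_add_iff 1]
    have s1 := summable_pow_mul_geometric_of_norm_lt_one 1 (r := q)
      (by rw [Real.norm_eq_abs, abs_of_nonneg hq0]; exact hq1)
    have s2 := summable_geometric_of_lt_one hq0 hq1
    refine Summable.of_nonneg_of_le (fun m => by positivity) (fun m => ?_)
      ((s1.add s2).mul_left (C * (2/(r+1))))
    calc |mehC x (m+1)| * (((m+1:ℕ):ℝ) * r^(m+1-1))
        ≤ C * (2/(r+1))^(m+1) * (((m+1:ℕ):ℝ) * r^(m+1-1)) :=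
          mul_le_mul_of_nonneg_right (hb _) (by positivity)
      _ = _ := by rw [hq, mul_pow]; rw [Nat.add_sub_cancel]; push_cast; ring

lemma mehF_hasSum (x t : ℝ) (ht : |t| < 1) : HasSum (fun m : ℕ => mehC x m * t^m) (mehF x t) := by
  apply Summable.hasSum
  apply Summable.of_norm
  simpa [abs_mul, abs_pow] using (mehC_bound x |t| (abs_nonneg _) ht).1

noncomputable def mehD (x t : ℝ) : ℝ := ∑' m : ℕ, mehC x m * (m * t^(m-1))

lemma mehD_hasSum (x t : ℝ) (ht : |t| < 1) :
    HasSum (fun m : ℕ => mehC x m * (m * t^(m-1))) (mehD x t) := by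
  apply Summable.hasSum
  apply Summable.of_norm
  simpa [abs_mul, abs_pow] using (mehC_bound x |t| (abs_nonneg _) ht).2

lemma mehF_hasDerivAt (x t : ℝ) (ht : |t| < 1) : HasDerivAt (mehF x) (mehD x t) t := by
  obtain ⟨r, h1, h2⟩ := exists_between ht
  have hr0 : 0 < r := (abs_nonneg t).trans_lt h1
  refine hasDerivAt_tsum_of_isPreconnected (g := fun (m : ℕ) (t : ℝ) => mehC x m * t^m)
    (g' := fun (m : ℕ) (t : ℝ) => mehC x m * (m * t^(m-1))) (mehC_bound x r hr0.le h2).2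
    (t := Metric.ball (0:ℝ) r) (y₀ := 0) Metric.isOpen_ball
    (convex_ball (0:ℝ) r).isPreconnected (fun m y _ => ?_) (fun m y hy => ?_) ?_ ?_ ?_
  · exact (hasDerivAt_pow m y).const_mul _
  · have hy' : |y| < r := by simpa using hy
    rw [Real.norm_eq_abs, abs_mul, abs_mul, abs_pow, Nat.abs_cast]
    gcongr
  · simpa using hr0
  · exact (mehF_hasSum x 0 (by simp)).summable
  · simpa using h1

lemma mehF_ode (x t : ℝ) (ht : |t| < 1) :
    (1-t)^2 * mehD x t = ((1-t)/2 - x^2) * mehF x t := by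
  have hF := mehF_hasSum x t ht
  have hD := mehD_hasSum x t ht
  have hF1 := (hasSum_nat_add_iff' 1).2 hF
  have hD1 := (hasSum_nat_add_iff' 1).2 hD
  have hD2 := (hasSum_nat_add_iff' 2).2 hD
  simp only [Finset.sum_range_succ, Finset.sum_range_zero, mehC_zero, mehC_one] at hF1 hD1 hD2
  have hA := (((hD1.mul_left (2*t)).add (hF1.mul_left (1/2 - x^2))).sub
    (hD.mul_left (t^2))).sub (hF.mul_left (t/2))
  have heq : (fun m : ℕ => mehC x (m+2) * (((m+2:ℕ):ℝ) * t^(m+2-1))) = fun m : ℕ =>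
      2*t * (mehC x (m+1) * (((m+1:ℕ):ℝ) * t^(m+1-1))) + (1/2 - x^2) * (mehC x (m+1) * t^(m+1))
      - t^2 * (mehC x m * (m * t^(m-1))) - t/2 * (mehC x m * t^m) := by
    funext m
    have hr := mehC_rec x m
    have hm : t^2 * (mehC x m * (m * t^(m-1))) = mehC x m * (m * t^(m+1)) := by
      cases m with
      | zero => simp
      | succ k => simp only [Nat.add_sub_cancel]; ring
    have e1 : m + 2 - 1 = m + 1 := rfl
    have e2 : m + 1 - 1 = m := rfl
    rw [hm, e1, e2]
    push_cast
    linear_combination t^(m+1) * hr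
  rw [heq] at hD2
  have := hD2.unique hA
  simp at this
  linear_combination this

theorem mehler_at_zero (ρ x : ℝ) (hρ : |ρ| < 1) :
    ∑' n : ℕ, ρ ^ n / (2 ^ n * Nat.factorial n) * physHermite n x * physHermite n 0
      = (Real.sqrt (1 - ρ^2))⁻¹ * Real.exp (-x^2 * ρ^2 / (1 - ρ^2)) := by
  have ht : |ρ^2| < 1 := by
    rw [abs_pow]; exact pow_lt_one₀ (abs_nonneg _) hρ (by norm_num)
  have h0 : HasSum (fun n : ℕ => ρ ^ n / (2 ^ n * Nat.factorial n) * physHermite n x *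
      physHermite n 0) (mehF x (ρ^2) + 0) := by
    refine HasSum.even_add_odd ?_ ?_
    · convert mehF_hasSum x (ρ^2) ht using 2 with m
      rw [(physHermite_zero_vals m).1, mehC, div_pow, pow_mul, pow_mul]
      have : ((2*m).factorial : ℝ) ≠ 0 := by positivity
      have : (m.factorial : ℝ) ≠ 0 := by positivity
      field_simp
      norm_num
      ring
    · simp [(physHermite_zero_vals _).2, hasSum_zero]
  rw [h0.tsum_eq, add_zero]
  set u : ℝ → ℝ := fun t => mehF x t * (Real.sqrt (1-t) * Real.exp (x^2 * t / (1-t))) with hu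
  have hder : ∀ t ∈ Metric.ball (0:ℝ) 1, HasDerivAt u 0 t := by
    intro t ht
    have ht' : |t| < 1 := by simpa using ht
    have hlt : 0 < 1 - t := by linarith [(abs_lt.1 ht').2]
    have hne : 1 - t ≠ 0 := hlt.ne'
    have hs := ((hasDerivAt_id t).const_sub 1).sqrt hne
    have he := ((((hasDerivAt_id t).const_mul (x^2)).div ((hasDerivAt_id t).const_sub 1) hne)).exp
    have h := (mehF_hasDerivAt x t ht').mul (hs.mul he)
    refine h.congr_deriv ?_
    have hsq : Real.sqrt (1-t) ^ 2 = 1 - t := Real.sq_sqrt hlt.le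
    have hsn : Real.sqrt (1-t) ≠ 0 := (Real.sqrt_pos.2 hlt).ne'
    have hode := mehF_ode x t ht'
    have hD : mehD x t = ((1-t)/2 - x^2) * mehF x t / (1-t)^2 := by
      rw [← hode]; field_simp
    simp only [id, hD, Pi.mul_apply, Pi.div_apply]
    set s := Real.sqrt (1-t)
    have ht2 : t = 1 - s^2 := by linarith
    generalize Real.exp _ = e
    generalize mehF x t = f
    clear_value s
    subst ht2
    have e1 : 1 - (1 - s^2) = s^2 := by ring
    simp only [e1]
    field_simp
    ring
  have hconst : u (ρ^2) = u 0 := by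
    refine IsOpen.is_const_of_deriv_eq_zero Metric.isOpen_ball (convex_ball (0:ℝ) 1).isPreconnected
      (fun t h => (hder t h).differentiableAt.differentiableWithinAt)
      (fun t h => (hder t h).deriv) ?_ ?_
    · simpa using hρ
    · simp
  have hu0 : u 0 = 1 := by
    have : mehF x 0 = 1 := by
      rw [mehF, tsum_eq_single 0 (by intro m hm; simp [hm])]
      simp [mehC_zero]
    simp [hu, this]
  rw [hu0] at hconst
  have hlt : 0 < 1 - ρ^2 := by linarith [(abs_lt.1 ht).2]
  have hsn : Real.sqrt (1-ρ^2) ≠ 0 := (Real.sqrt_pos.2 hlt).ne'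
  have : -x^2 * ρ^2 / (1 - ρ^2) = -(x^2 * ρ^2 / (1 - ρ^2)) := by ring
  rw [this, Real.exp_neg, ← mul_inv]
  exact eq_inv_of_mul_eq_one_left hconst
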